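/- Fix N ≥ 1 and, for i = 1,…,N, set f_i(p) = r_{i,1}·p + r_{i,2}. Let μ : ℝ → ℝ be continuously differentiable, λ₁, λ₂ > 0, q_max ∈ ℝ, and let p, ν : [0,∞) → ℝ be continuous, K : [0,∞) → ℝ, and d : [0,∞) → ℝ be the observed aggregate dropout. For z > 0 define the consistent-composition set W(z, d, p) = { w ∈ ℝᴺ : w ≥ 0, Σᵢ wᵢ = 1, z·Σᵢ f_i(p)·wᵢ = d }. Let w* : [0,∞) → ℝᴺ be the true (unobservable) composition, and suppose (q, z, α) : [0,∞) → ℝ³ is a differentiable solution of q̇ = αz − μ(q), ż = K(t) − z·Σᵢ f_i(p(t))·w*ᵢ(t) − αz, α̇ = ν(t). Define, for a composition w, η₁(t, w) = (α(t)z(t) − μ(q(t)))·μ'(q(t)) − α(t)·(K(t) − z(t)(wᵀr₂) − α(t)z(t)) + α(t)z(t)(wᵀr₁)·p(t) − z(t)·ν(t) + λ₁·(μ(q(t)) − α(t)z(t)) + λ₂·(μ(q(t)) − α(t)z(t) + λ₁(q_max − q(t))). Assume that for all t ≥ 0: (i) w*(t) ∈ W(z(t), d(t), p(t)); (ii) the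 worst-case margin satisfies inf_{w ∈ W(z(t), d(t), p(t))} η₁(t, w) ≥ 0; (iii) q(0) ≤ q_max and μ(q(0)) − α(0)z(0) + λ₁(q_max − q(0)) ≥ 0. Then q(t) ≤ q_max for all t ≥ 0. -/

import Mathlib

open scoped BigOperators

/-!
Let `b = qmax - q`. Along a trajectory `η₁ t (w* t)` is exactly `b'' + l1 b' + l2 (b' + l1 b)`.
It is nonnegative because it dominates the worst case: the consistent set lies in the compact
simplex, so the infimum of the continuous `η₁ t` over it is a genuine lower bound. Grönwall's
inequality, applied first to `ψ₁ = b' + l1 b` and then to `b`, propagates nonnegativity from time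
`0`.
-/

open Set

section Barrier

variable {a : ℝ}

theorem nonneg_of_nonneg_deriv_right_add_mul {g g' : ℝ → ℝ} {l : ℝ}
    (hg : ContinuousOn g (Ici a)) (hg' : ∀ t ≥ a, HasDerivWithinAt g (g' t) (Ici t) t)
    (hbound : ∀ t ≥ a, 0 ≤ g' t + l * g t) (ha : 0 ≤ g a) :
    ∀ t ≥ a, 0 ≤ g t := by
  intro t ht
  have hgronwall : -g t ≤ gronwallBound 0 (-l) 0 (t - a) :=
    le_gronwallBound_of_liminf_deriv_right_le (f := fun s => -g s) (f' := fun s => -g' s)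
      (hg.neg.mono Icc_subset_Ici_self)
      (fun s hs _ => (hg' s hs.1).neg.liminf_right_slope_le)
      (neg_nonpos.2 ha) (fun s hs => by linarith [hbound s hs.1]) t (right_mem_Icc.2 ht)
  rwa [gronwallBound_ε0_δ0, neg_nonpos] at hgronwall

theorem nonneg_of_nonneg_second_order_barrier {b b' b'' : ℝ → ℝ} {l₁ l₂ : ℝ}
    (hb : ContinuousOn b (Ici a)) (hb' : ContinuousOn b' (Ici a))
    (hderiv : ∀ t ≥ a, HasDerivWithinAt b (b' t) (Ici t) t)
    (hderiv' : ∀ t ≥ a, HasDerivWithinAt b' (b'' t) (Ici t) t)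
    (hbound : ∀ t ≥ a, 0 ≤ b'' t + l₁ * b' t + l₂ * (b' t + l₁ * b t))
    (ha : 0 ≤ b a) (ha' : 0 ≤ b' a + l₁ * b a) :
    ∀ t ≥ a, 0 ≤ b t := by
  have hψ : ∀ t ≥ a, 0 ≤ b' t + l₁ * b t :=
    nonneg_of_nonneg_deriv_right_add_mul (hb'.add (hb.const_mul l₁))
      (fun t ht => (hderiv' t ht).add ((hderiv t ht).const_mul l₁)) hbound ha'
  exact nonneg_of_nonneg_deriv_right_add_mul hb hderiv hψ ha

end Barrier

theorem csInf_image_le_of_subset_isCompact {X Y : Type*} [TopologicalSpace X]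
    [ConditionallyCompleteLinearOrder Y] [TopologicalSpace Y] [ClosedIicTopology Y]
    {C S : Set X} {g : X → Y} {x : X} (hC : IsCompact C) (hg : ContinuousOn g C) (hSC : S ⊆ C)
    (hx : x ∈ S) : sInf (g '' S) ≤ g x :=
  csInf_le ((hC.bddBelow_image hg).mono (image_mono hSC)) (mem_image_of_mem g hx)

theorem sum_affine_mul {ι R : Type*} [Fintype ι] [CommSemiring R] (r₁ r₂ w : ι → R) (x : R) :
    ∑ i, (r₁ i * x + r₂ i) * w i = (∑ i, w i * r₁ i) * x + ∑ i, w i * r₂ i := by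
  rw [Finset.sum_mul, ← Finset.sum_add_distrib]
  exact Finset.sum_congr rfl fun i _ => by ring

theorem robust_ihocbf_capacity_invariance_general {ι : Type*} [Fintype ι] (r1 r2 : ι → ℝ)
    (f : ι → ℝ → ℝ) (hf : ∀ i pr, f i pr = r1 i * pr + r2 i)
    (μ : ℝ → ℝ) (hμ : Differentiable ℝ μ) (l1 l2 qmax : ℝ) (p ν K d : ℝ → ℝ)
    (W : ℝ → ℝ → ℝ → Set (ι → ℝ))
    (hW : ∀ zv dv pv,
      W zv dv pv =
        {w | (∀ i, 0 ≤ w i) ∧ (∑ i, w i) = 1 ∧ zv * (∑ i, f i pv * w i) = dv})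
    (wstar : ℝ → ι → ℝ) (q z α : ℝ → ℝ)
    (hq : ∀ t ≥ (0 : ℝ), HasDerivWithinAt q (α t * z t - μ (q t)) (Ici 0) t)
    (hz : ∀ t ≥ (0 : ℝ),
      HasDerivWithinAt z (K t - z t * (∑ i, f i (p t) * wstar t i) - α t * z t) (Ici 0) t)
    (hα : ∀ t ≥ (0 : ℝ), HasDerivWithinAt α (ν t) (Ici 0) t)
    (η₁ : ℝ → (ι → ℝ) → ℝ)
    (hη : ∀ t w₀,
      η₁ t w₀ =
        (α t * z t - μ (q t)) * deriv μ (q t)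
          - α t * (K t - z t * (∑ i, w₀ i * r2 i) - α t * z t)
          + α t * z t * (∑ i, w₀ i * r1 i) * p t
          - z t * ν t
          + l1 * (μ (q t) - α t * z t)
          + l2 * (μ (q t) - α t * z t + l1 * (qmax - q t)))
    (hmem : ∀ t ≥ (0 : ℝ), wstar t ∈ W (z t) (d t) (p t))
    (hrobust : ∀ t ≥ (0 : ℝ), 0 ≤ sInf (η₁ t '' W (z t) (d t) (p t)))
    (hq0 : q 0 ≤ qmax)
    (hψ0 : 0 ≤ μ (q 0) - α 0 * z 0 + l1 * (qmax - q 0)) :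
    ∀ t ≥ (0 : ℝ), q t ≤ qmax := by
  have hη_cont (t : ℝ) : Continuous (η₁ t) := by
    rw [funext (hη t)]
    fun_prop
  have hW_subset (zv dv pv : ℝ) : W zv dv pv ⊆ stdSimplex ℝ ι := by
    rw [hW]
    exact fun w hw => ⟨hw.1, hw.2.1⟩
  have hη_nonneg : ∀ t ≥ (0 : ℝ), 0 ≤ η₁ t (wstar t) := fun t ht =>
    (hrobust t ht).trans <| csInf_image_le_of_subset_isCompact (isCompact_stdSimplex ℝ ι)
      (hη_cont t).continuousOn (hW_subset _ _ _) (hmem t ht)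
  have hb : ∀ t ≥ (0 : ℝ),
      HasDerivWithinAt (fun s => qmax - q s) (μ (q t) - α t * z t) (Ici 0) t := fun t ht =>
    ((hq t ht).const_sub qmax).congr_deriv (neg_sub _ _)
  let b'' : ℝ → ℝ := fun t => deriv μ (q t) * (α t * z t - μ (q t))
    - (ν t * z t + α t * (K t - z t * (∑ i, f i (p t) * wstar t i) - α t * z t))
  have hb' : ∀ t ≥ (0 : ℝ),
      HasDerivWithinAt (fun s => μ (q s) - α s * z s) (b'' t) (Ici 0) t := fun t ht =>
    ((hμ (q t)).hasDerivAt.comp_hasDerivWithinAt t (hq t ht)).sub ((hα t ht).mul (hz t ht))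
  have hη_eq (t : ℝ) : η₁ t (wstar t) = b'' t + l1 * (μ (q t) - α t * z t)
      + l2 * (μ (q t) - α t * z t + l1 * (qmax - q t)) := by
    simp only [b'', hη, hf, sum_affine_mul]
    ring
  have hb_nonneg : ∀ t ≥ (0 : ℝ), 0 ≤ qmax - q t :=
    nonneg_of_nonneg_second_order_barrier (l₁ := l1) (l₂ := l2)
      (fun t ht => (hb t ht).continuousWithinAt) (fun t ht => (hb' t ht).continuousWithinAt)
      (fun t ht => (hb t ht).mono (Ici_subset_Ici.2 ht))
      (fun t ht => (hb' t ht).mono (Ici_subset_Ici.2 ht))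
      (fun t ht => hη_eq t ▸ hη_nonneg t ht) (sub_nonneg.2 hq0) hψ0
  exact fun t ht => sub_nonneg.1 (hb_nonneg t ht)

/-- Robust queue-capacity guarantee (Proposition 1, capacity part): the controller
only knows that the true composition `w*` lies in the consistent set
`W(z, d, p) = {w ≥ 0, Σᵢ wᵢ = 1, z Σᵢ fᵢ(p) wᵢ = d}`. If the worst-case iHOCBF
margin `inf_{w ∈ W} η₁(t, w)` is nonnegative for all `t ≥ 0`, and the initial
state satisfies `q(0) ≤ q_max` and `ψ₁(0) ≥ 0`, then `q(t) ≤ q_max` for all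
`t ≥ 0`. -/
theorem robust_ihocbf_capacity_invariance
    (N : ℕ) (hN : 1 ≤ N) (r1 r2 : Fin N → ℝ)
    (f : Fin N → ℝ → ℝ) (hf : ∀ i pr, f i pr = r1 i * pr + r2 i)
    (μ : ℝ → ℝ) (hμ : ContDiff ℝ 1 μ)
    (l1 l2 : ℝ) (hl1 : 0 < l1) (hl2 : 0 < l2) (qmax : ℝ)
    (p ν : ℝ → ℝ) (hp : Continuous p) (hν : Continuous ν)
    (K d : ℝ → ℝ)
    (W : ℝ → ℝ → ℝ → Set (Fin N → ℝ))
    (hW : ∀ zv dv pv,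
      W zv dv pv =
        {w | (∀ i, 0 ≤ w i) ∧ (∑ i, w i) = 1 ∧ zv * (∑ i, f i pv * w i) = dv})
    (wstar : ℝ → Fin N → ℝ)
    (q z α : ℝ → ℝ)
    (hq : ∀ t ≥ (0 : ℝ), HasDerivAt q (α t * z t - μ (q t)) t)
    (hz : ∀ t ≥ (0 : ℝ),
      HasDerivAt z (K t - z t * (∑ i, f i (p t) * wstar t i) - α t * z t) t)
    (hα : ∀ t ≥ (0 : ℝ), HasDerivAt α (ν t) t)
    (η₁ : ℝ → (Fin N → ℝ) → ℝ)
    (hη : ∀ t w₀,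
      η₁ t w₀ =
        (α t * z t - μ (q t)) * deriv μ (q t)
          - α t * (K t - z t * (∑ i, w₀ i * r2 i) - α t * z t)
          + α t * z t * (∑ i, w₀ i * r1 i) * p t
          - z t * ν t
          + l1 * (μ (q t) - α t * z t)
          + l2 * (μ (q t) - α t * z t + l1 * (qmax - q t)))
    (hmem : ∀ t ≥ (0 : ℝ), wstar t ∈ W (z t) (d t) (p t))
    (hrobust : ∀ t ≥ (0 : ℝ), 0 ≤ sInf (η₁ t '' W (z t) (d t) (p t)))
    (hq0 : q 0 ≤ qmax)
    (hψ0 : 0 ≤ μ (q 0) - α 0 * z 0 + l1 * (qmax - q 0)) :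
    ∀ t ≥ (0 : ℝ), q t ≤ qmax :=
  robust_ihocbf_capacity_invariance_general r1 r2 f hf μ (hμ.differentiable one_ne_zero) l1 l2 qmax
    p ν K d W hW wstar q z α (fun t ht => (hq t ht).hasDerivWithinAt)
    (fun t ht => (hz t ht).hasDerivWithinAt) (fun t ht => (hα t ht).hasDerivWithinAt)
    η₁ hη hmem hrobust hq0 hψ0
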